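/- For every positive integer k and every real K > 0 there exist constants c₁ > 0, c₂ > 0, and a positive integer N, depending only on k and K, such that the following holds. If n ≥ N and A₁, …, A_k ⊆ ℤ are sets each of size n with |Aᵢ + Aᵢ| ≤ K·|Aᵢ| for all i = 1, …, k, then there exists a diagonal set C ⊆ A₁ × ⋯ × A_k with |C + C| ≤ c₁·|C| and |C| ≥ c₂·n. -/

import Mathlib

open Pointwise

/-- `C` is a diagonal set: any two distinct elements of `C` are strictly
comparable in every coordinate, in the same direction. -/
def IsDiagonal {k : ℕ} (C : Finset (Fin k → ℤ)) : Prop :=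
  ∀ x ∈ C, ∀ y ∈ C, x ≠ y → (∀ i, 0 < x i - y i) ∨ (∀ i, x i - y i < 0)

/-!
By Plünnecke's inequality, Ruzsa's model lemma and Bogolyubov's lemma, there is a locally additive
injective map `l` from a Bohr set in a cyclic group `G` of order `O(n)` to `2A - 2A`, where `A` is
one of the sets `A i`; its image contains a large part of a translate of `A`. Convex combinations
of the coordinate vectors of short elements at which `l` is positive stay away from `0`: otherwise
rounding the coefficients of their first multiples would give more than `|G|` elements of `G`
along which `l` strictly increases. So, by Hahn–Banach, a linear functional of size `O(|G|)` is at
least `1` on all these vectors, and its integer part is strictly increasing and additive up to an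
error of `1`, on a large part of `A`, with values `O(n)`. By pigeonhole, many points of the
product of the resulting parts of the `A i` have the same differences between the values of the
`k` functions; they form a diagonal set, and its sumset embeds in `O(n)` points, since each
coordinate of a sum is determined by the value of its function and the values in different
coordinates determine each other up to `O(1)`.
-/

section Pigeonhole

open scoped Finset

theorem exists_card_le_card_mul_card_fiber {α β : Type*} [DecidableEq β] {s : Finset α}
    {t : Finset β} {f : α → β} (hf : ∀ a ∈ s, f a ∈ t) (ht : t.Nonempty) :
    ∃ b ∈ t, #s ≤ #t * #{a ∈ s | f a = b} := by
  obtain ⟨b, hb, hmax⟩ := t.exists_max_image (fun b ↦ #{a ∈ s | f a = b}) ht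
  refine ⟨b, hb, ?_⟩
  rw [mul_comm]
  exact Finset.card_le_mul_card_image_of_maps_to hf _ hmax

end Pigeonhole

/-- `l` is additive on `S`: it respects every sum `x + y` such that `x`, `y` and `x + y` all lie
in `S`. This is what remains of additivity for maps defined on a Bohr set or on a difference
set. -/
def IsLocalAddHom {G H : Type*} [Add G] [Add H] (S : Set G) (l : G → H) : Prop :=
  ∀ x ∈ S, ∀ y ∈ S, x + y ∈ S → l (x + y) = l x + l y

theorem IsLocalAddHom.mono {G H : Type*} [Add G] [Add H] {S T : Set G} {l : G → H}
    (hl : IsLocalAddHom T l) (hST : S ⊆ T) : IsLocalAddHom S l :=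
  fun x hx y hy hxy ↦ hl x (hST hx) y (hST hy) (hST hxy)

theorem IsLocalAddHom.map_zero {G H : Type*} [AddZeroClass G] [AddGroup H] {S : Set G} {l : G → H}
    (hl : IsLocalAddHom S l) (h0 : 0 ∈ S) : l 0 = 0 := by
  simpa using hl 0 h0 0 h0 (by simpa using h0)

section BohrSet

open Complex Real FourierTransform
open scoped Finset

variable {G : Type*} [AddCommGroup G] {Γ : Finset (AddChar G ℂ)}

/-- The group of all pairs `(x, t)` such that `t ψ` is a logarithm of `ψ x`, in units of `2πi`, for
every `ψ ∈ Γ`. Its elements with small `t` are the points of a Bohr set together with their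
coordinates, so that the additivity of these coordinates is the additivity of the group. -/
def bohrLattice (Γ : Finset (AddChar G ℂ)) : AddSubgroup (G × (Γ → ℝ)) where
  carrier := {p | ∀ ψ : Γ, ψ.1 p.1 = 𝐞 (p.2 ψ)}
  zero_mem' := by simp
  add_mem' hp hq ψ := by simp [AddChar.map_add_eq_mul, hp ψ, hq ψ]
  neg_mem' hp ψ := by simp [AddChar.map_neg_eq_inv, hp ψ]

/-- The coordinates of `x` with respect to the frequencies in `Γ`: the arguments of the numbers
`ψ x`, in units of `2π`. -/
noncomputable def bohrVec (Γ : Finset (AddChar G ℂ)) (x : G) : Γ → ℝ :=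
  fun ψ ↦ arg (ψ.1 x) / (2 * π)

theorem mk_bohrVec_mem_bohrLattice [Finite G] (x : G) : (x, bohrVec Γ x) ∈ bohrLattice Γ := by
  intro ψ
  have h := norm_mul_exp_arg_mul_I (ψ.1 x)
  rw [ψ.1.norm_apply, ofReal_one, one_mul] at h
  simp only [bohrVec, Real.fourierChar_apply, mul_div_cancel₀ _ two_pi_pos.ne', h]

theorem bohrVec_eq_of_mem_bohrLattice {x : G} {t : Γ → ℝ} (h : (x, t) ∈ bohrLattice Γ)
    (ht : ‖t‖ < 1 / 2) : bohrVec Γ x = t := by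
  ext ψ
  have htψ := abs_lt.1 ((norm_le_pi_norm t ψ).trans_lt ht)
  have harg : arg (ψ.1 x) = 2 * π * t ψ := by
    rw [h ψ, Real.fourierChar_apply', Circle.arg_exp] <;> nlinarith [pi_pos]
  simp only [bohrVec, harg, mul_div_cancel_left₀ _ two_pi_pos.ne']

theorem bohrVec_mem_Ioc (x : G) (ψ : Γ) : bohrVec Γ x ψ ∈ Set.Ioc (-(1 / 2)) (1 / 2) := by
  have h := arg_mem_Ioc (ψ.1 x)
  simp only [bohrVec, Set.mem_Ioc, lt_div_iff₀ two_pi_pos, div_le_iff₀ two_pi_pos] at h ⊢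
  constructor <;> linarith [pi_pos]

@[simp]
theorem bohrVec_zero : bohrVec Γ 0 = 0 := by
  ext ψ
  simp [bohrVec]

theorem bohrVec_add [Finite G] {x y : G} (h : ‖bohrVec Γ x + bohrVec Γ y‖ < 1 / 2) :
    bohrVec Γ (x + y) = bohrVec Γ x + bohrVec Γ y :=
  bohrVec_eq_of_mem_bohrLattice
    (add_mem (mk_bohrVec_mem_bohrLattice x) (mk_bohrVec_mem_bohrLattice y)) h

theorem bohrVec_sub [Finite G] {x y : G} (h : ‖bohrVec Γ x - bohrVec Γ y‖ < 1 / 2) :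
    bohrVec Γ (x - y) = bohrVec Γ x - bohrVec Γ y :=
  bohrVec_eq_of_mem_bohrLattice
    (sub_mem (mk_bohrVec_mem_bohrLattice x) (mk_bohrVec_mem_bohrLattice y)) h

theorem bohrVec_sum_zsmul [Finite G] {J : Type*} {s : Finset J} {c : J → ℤ} {x : J → G}
    (h : ‖∑ j ∈ s, c j • bohrVec Γ (x j)‖ < 1 / 2) :
    bohrVec Γ (∑ j ∈ s, c j • x j) = ∑ j ∈ s, c j • bohrVec Γ (x j) := by
  refine bohrVec_eq_of_mem_bohrLattice ?_ h
  have hsum : (∑ j ∈ s, c j • x j, ∑ j ∈ s, c j • bohrVec Γ (x j)) =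
      ∑ j ∈ s, c j • (x j, bohrVec Γ (x j)) := by
    simp [Prod.ext_iff, Prod.fst_sum, Prod.snd_sum]
  rw [hsum]
  exact sum_mem fun j _ ↦ zsmul_mem (mk_bohrVec_mem_bohrLattice (x j)) (c j)

variable [Fintype G]

/-- The Bohr set of radius `ρ` with frequencies in `Γ`. -/
noncomputable def bohrSet (Γ : Finset (AddChar G ℂ)) (ρ : ℝ) : Finset G :=
  {x | ‖bohrVec Γ x‖ ≤ ρ}

@[simp]
theorem mem_bohrSet {ρ : ℝ} {x : G} : x ∈ bohrSet Γ ρ ↔ ‖bohrVec Γ x‖ ≤ ρ := by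
  simp [bohrSet]

theorem bohrSet_mono {ρ ρ' : ℝ} (h : ρ ≤ ρ') : bohrSet Γ ρ ⊆ bohrSet Γ ρ' :=
  fun _ hx ↦ mem_bohrSet.2 ((mem_bohrSet.1 hx).trans h)

theorem add_mem_bohrSet {ρ σ : ℝ} (h : ρ + σ < 1 / 2) {x y : G} (hx : x ∈ bohrSet Γ ρ)
    (hy : y ∈ bohrSet Γ σ) : x + y ∈ bohrSet Γ (ρ + σ) := by
  rw [mem_bohrSet] at hx hy ⊢
  have hxy := norm_add_le_of_le hx hy
  rwa [bohrVec_add (hxy.trans_lt h)]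

theorem sub_mem_bohrSet {ρ σ : ℝ} (h : ρ + σ < 1 / 2) {x y : G} (hx : x ∈ bohrSet Γ ρ)
    (hy : y ∈ bohrSet Γ σ) : x - y ∈ bohrSet Γ (ρ + σ) := by
  rw [mem_bohrSet] at hx hy ⊢
  have hxy := norm_sub_le_of_le hx hy
  rwa [bohrVec_sub (hxy.trans_lt h)]

theorem re_nonneg_of_mem_bohrSet {x : G} (hx : x ∈ bohrSet Γ (1 / 4)) {ψ : AddChar G ℂ}
    (hψ : ψ ∈ Γ) : 0 ≤ (ψ x).re := by
  have h : |arg (ψ x) / (2 * π)| ≤ 1 / 4 :=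
    (norm_le_pi_norm (bohrVec Γ x) ⟨ψ, hψ⟩).trans (mem_bohrSet.1 hx)
  rw [abs_div, abs_of_pos two_pi_pos, div_le_iff₀ two_pi_pos] at h
  refine abs_arg_le_pi_div_two_iff.1 ?_
  linarith

theorem card_le_pow_mul_card_bohrSet (Γ : Finset (AddChar G ℂ)) {M : ℕ} (hM : 2 ≤ M) :
    Fintype.card G ≤ M ^ #Γ * #(bohrSet Γ (1 / M)) := by
  classical
  have hM0 : (0 : ℝ) < M := by positivity
  let cube (x : G) : Γ → ℤ := fun ψ ↦ ⌊M * (1 / 2 - bohrVec Γ x ψ)⌋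
  have hcube (x : G) : cube x ∈ Fintype.piFinset fun _ : Γ ↦ Finset.Ico (0 : ℤ) M := by
    refine Fintype.mem_piFinset.2 fun ψ ↦ Finset.mem_Ico.2 ?_
    obtain ⟨hlow, hhigh⟩ := bohrVec_mem_Ioc x ψ
    constructor
    · exact Int.floor_nonneg.2 (mul_nonneg hM0.le (by linarith))
    · exact Int.floor_lt.2 (by push_cast; nlinarith)
  obtain ⟨b, -, hb⟩ := exists_card_le_card_mul_card_fiber (s := Finset.univ) (fun x _ ↦ hcube x)
    ⟨cube 0, hcube 0⟩
  simp only [Finset.card_univ, Fintype.card_piFinset, Int.card_Ico, Finset.prod_const,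
    Fintype.card_coe, sub_zero, Int.toNat_natCast] at hb
  refine hb.trans (Nat.mul_le_mul_left _ ?_)
  obtain hempty | ⟨y, hy⟩ := Finset.eq_empty_or_nonempty {x | cube x = b}
  · simp [hempty]
  refine Finset.card_le_card_of_injOn (· - y) (fun x hx ↦ ?_) (sub_left_injective.injOn)
  have hxy : cube x = cube y := by grind
  have hlt : ‖bohrVec Γ x - bohrVec Γ y‖ < 1 / M := by
    refine (pi_norm_lt_iff (by positivity)).2 fun ψ ↦ ?_
    have h := Int.abs_sub_lt_one_of_floor_eq_floor (congrFun hxy ψ)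
    rwa [← mul_sub, sub_sub_sub_cancel_left, abs_mul, abs_of_pos hM0, abs_sub_comm,
      ← lt_div_iff₀' hM0] at h
  have hM2 : (1 : ℝ) / M ≤ 1 / 2 := by gcongr; exact_mod_cast hM
  simpa [bohrVec_sub (hlt.trans_le hM2)] using hlt.le

end BohrSet

section Bogolyubov

open Complex
open scoped Finset

variable {G : Type*} [AddCommGroup G]

/-- The sum of the values of the character `ψ` on `A`, that is, the Fourier coefficient at `ψ` of
the indicator function of `A`, without normalization and without conjugation. -/
noncomputable def charSum (A : Finset G) (ψ : AddChar G ℂ) : ℂ :=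
  ∑ a ∈ A, ψ a

theorem ofReal_norm_charSum_sq [Finite G] (A : Finset G) (ψ : AddChar G ℂ) :
    ((‖charSum A ψ‖ ^ 2 : ℝ) : ℂ) = ∑ p ∈ A ×ˢ A, ψ (p.1 - p.2) := by
  rw [ofReal_pow, ← mul_conj', charSum, map_sum, Finset.sum_mul_sum, Finset.sum_product]
  simp only [sub_eq_add_neg, AddChar.map_add_eq_mul, AddChar.map_neg_eq_conj]

theorem sum_apply_mul_norm_charSum_pow_four_eq_zero [Finite G] [DecidableEq G] {A : Finset G}
    {x : G} (hx : x ∉ 2 • A - 2 • A) :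
    ∑ ψ : AddChar G ℂ, ψ x * ((‖charSum A ψ‖ ^ 4 : ℝ) : ℂ) = 0 := by
  cases nonempty_fintype G
  have hexpand (ψ : AddChar G ℂ) : ψ x * ((‖charSum A ψ‖ ^ 4 : ℝ) : ℂ) =
      ∑ p ∈ A ×ˢ A, ∑ q ∈ A ×ˢ A, ψ (x - ((p.2 + q.2) - (p.1 + q.1))) := by
    rw [show ‖charSum A ψ‖ ^ 4 = ‖charSum A ψ‖ ^ 2 * ‖charSum A ψ‖ ^ 2 by ring, ofReal_mul,
      ofReal_norm_charSum_sq, Finset.sum_mul_sum, Finset.mul_sum]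
    simp only [Finset.mul_sum, ← AddChar.map_add_eq_mul]
    refine Finset.sum_congr rfl fun p _ ↦ Finset.sum_congr rfl fun q _ ↦ congrArg ψ ?_
    abel
  simp_rw [hexpand]
  rw [Finset.sum_comm]
  refine Finset.sum_eq_zero fun p hp ↦ ?_
  rw [Finset.sum_comm]
  refine Finset.sum_eq_zero fun q hq ↦ ?_
  rw [Finset.mem_product] at hp hq
  rw [AddChar.sum_apply_eq_ite, if_neg]
  rw [two_nsmul] at hx
  intro h
  rw [sub_eq_zero.1 h] at hx
  exact hx (Finset.sub_mem_sub (Finset.add_mem_add hp.2 hq.2) (Finset.add_mem_add hp.1 hq.1))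

variable [Fintype G]

theorem sum_norm_charSum_sq (A : Finset G) :
    ∑ ψ : AddChar G ℂ, ‖charSum A ψ‖ ^ 2 = Fintype.card G * #A := by
  classical
  have h : ∑ ψ : AddChar G ℂ, ((‖charSum A ψ‖ ^ 2 : ℝ) : ℂ) = Fintype.card G * #A := by
    simp_rw [ofReal_norm_charSum_sq, Finset.sum_comm (s := Finset.univ),
      AddChar.sum_apply_eq_ite, Finset.sum_product, sub_eq_zero]
    simp [mul_comm]
  exact_mod_cast h

/-- The frequencies at which the Fourier coefficient of `A` is large. The threshold is chosen so
that, in the sum of the fourth powers, the other frequencies contribute at most half of what the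
trivial character does. -/
noncomputable def largeSpectrum (A : Finset G) : Finset (AddChar G ℂ) :=
  {ψ | (#A : ℝ) ^ 3 / (2 * Fintype.card G) ≤ ‖charSum A ψ‖ ^ 2}

theorem card_largeSpectrum_le {A : Finset G} (hA : A.Nonempty) :
    (#(largeSpectrum A) : ℝ) ≤ 2 * (Fintype.card G / #A) ^ 2 := by
  have h : #(largeSpectrum A) * ((#A : ℝ) ^ 3 / (2 * Fintype.card G)) ≤ Fintype.card G * #A := by
    rw [← sum_norm_charSum_sq, ← nsmul_eq_mul]
    refine (Finset.card_nsmul_le_sum _ _ _ fun ψ hψ ↦ (Finset.mem_filter.1 hψ).2).trans ?_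
    exact Finset.sum_le_sum_of_subset_of_nonneg (Finset.subset_univ _) fun _ _ _ ↦ by positivity
  rw [← le_div_iff₀ (by positivity)] at h
  refine h.trans_eq ?_
  field_simp

theorem bohrSet_largeSpectrum_subset [DecidableEq G] {A : Finset G} (hA : A.Nonempty) :
    bohrSet (largeSpectrum A) (1 / 4) ⊆ 2 • A - 2 • A := by
  intro x hx
  by_contra hxA
  set τ : ℝ := (#A : ℝ) ^ 3 / (2 * Fintype.card G) with hτ
  have hterm (ψ : AddChar G ℂ) :
      (if ψ = 0 then (#A : ℝ) ^ 4 else 0) - τ * ‖charSum A ψ‖ ^ 2 ≤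
        (ψ x).re * ‖charSum A ψ‖ ^ 4 := by
    split_ifs with hψ0
    · have hpos : 0 ≤ τ * ‖charSum A ψ‖ ^ 2 := by positivity
      simp_all [charSum]
    by_cases hψ : ψ ∈ largeSpectrum A
    · have := re_nonneg_of_mem_bohrSet hx hψ
      have hpos : 0 ≤ τ * ‖charSum A ψ‖ ^ 2 := by positivity
      have hpos' : 0 ≤ (ψ x).re * ‖charSum A ψ‖ ^ 4 := by positivity
      linarith
    · have hsmall : ‖charSum A ψ‖ ^ 2 ≤ τ :=
        (not_le.1 fun h ↦ hψ (Finset.mem_filter.2 ⟨Finset.mem_univ ψ, h⟩)).le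
      have hre : -1 ≤ (ψ x).re := (abs_le.1 ((abs_re_le_norm _).trans_eq (ψ.norm_apply x))).1
      nlinarith [sq_nonneg (‖charSum A ψ‖ ^ 2), sq_nonneg ‖charSum A ψ‖]
  have hsum : ∑ ψ : AddChar G ℂ, (ψ x).re * ‖charSum A ψ‖ ^ 4 = 0 := by
    simpa only [re_sum, re_mul_ofReal, zero_re] using
      congrArg re (sum_apply_mul_norm_charSum_pow_four_eq_zero hxA)
  have h := Finset.sum_le_sum fun ψ (_ : ψ ∈ Finset.univ) ↦ hterm ψ
  rw [hsum, Finset.sum_sub_distrib, ← Finset.mul_sum, sum_norm_charSum_sq,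
    Finset.sum_ite_eq' _ _ _, if_pos (Finset.mem_univ _)] at h
  have hhalf : τ * (Fintype.card G * #A) = (#A : ℝ) ^ 4 / 2 := by
    rw [hτ]
    field_simp
  rw [hhalf] at h
  have : 0 < (#A : ℝ) ^ 4 := by positivity
  linarith

end Bogolyubov

section Separation

theorem exists_strongDual_one_le_of_le_norm {E : Type*} [NormedAddCommGroup E]
    [NormedSpace ℝ E] {C : Set E} (hC : Convex ℝ C) {ε : ℝ} (hε : 0 < ε)
    (hfar : ∀ x ∈ C, ε ≤ ‖x‖) :
    ∃ g : StrongDual ℝ E, (∀ x ∈ C, 1 ≤ g x) ∧ ‖g‖ ≤ ε⁻¹ := by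
  have hdisj : Disjoint (Metric.ball (0 : E) ε) C :=
    Set.disjoint_left.2 fun x hx hxC ↦ (hfar x hxC).not_gt (mem_ball_zero_iff.1 hx)
  obtain ⟨f, u, hball, hle⟩ :=
    geometric_hahn_banach_open (convex_ball 0 ε) Metric.isOpen_ball hC hdisj
  have hu : 0 < u := by simpa using hball 0 (Metric.mem_ball_self hε)
  have hclosed : ∀ x ∈ Metric.closedBall (0 : E) ε, f x ≤ u := by
    rw [← closure_ball _ hε.ne']
    exact closure_minimal (fun x hx ↦ (hball x hx).le) (isClosed_le f.continuous continuous_const)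
  have hf : ‖f‖ ≤ u / ε := f.opNorm_bound_of_ball_bound hε u fun x hx ↦
    abs_le'.2 ⟨hclosed x hx, map_neg f x ▸ hclosed (-x) (by simpa using hx)⟩
  refine ⟨u⁻¹ • f, fun x hx ↦ ?_, ?_⟩
  · rw [smul_apply, smul_eq_mul, ← div_eq_inv_mul, one_le_div hu]
    exact hle x hx
  · rwa [norm_smul, norm_inv, Real.norm_of_nonneg hu.le, inv_mul_le_iff₀ hu, ← div_eq_mul_inv]

theorem norm_sum_floor_zsmul_le {E J : Type*} [SeminormedAddCommGroup E] [NormedSpace ℝ E]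
    (s : Finset J) (p : J → ℝ) (v : J → E) :
    ‖∑ j ∈ s, ⌊p j⌋ • v j‖ ≤ ‖∑ j ∈ s, p j • v j‖ + ∑ j ∈ s, ‖v j‖ := by
  have hsplit : ∑ j ∈ s, ⌊p j⌋ • v j = ∑ j ∈ s, p j • v j - ∑ j ∈ s, Int.fract (p j) • v j := by
    rw [← Finset.sum_sub_distrib]
    refine Finset.sum_congr rfl fun j _ ↦ ?_
    rw [← sub_smul, Int.self_sub_fract, Int.cast_smul_eq_zsmul]
  have hfract : ‖∑ j ∈ s, Int.fract (p j) • v j‖ ≤ ∑ j ∈ s, ‖v j‖ := by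
    refine norm_sum_le_of_le _ fun j _ ↦ ?_
    rw [norm_smul, Real.norm_of_nonneg (Int.fract_nonneg _)]
    exact mul_le_of_le_one_left (norm_nonneg _) (Int.fract_lt_one _).le
  rw [hsplit]
  exact (norm_sub_le _ _).trans (by gcongr)

theorem exists_sum_floor_add_zsmul_eq {G J : Type*} [AddCommGroup G] [Fintype J] {w : J → ℝ}
    (hw : ∀ j, w j ∈ Set.Icc 0 1) (t : J → ℝ) (x : J → G) :
    ∃ s : Finset J, (∀ j, w j = 1 → j ∈ s) ∧
      ∑ j, ⌊t j + w j⌋ • x j = ∑ j, ⌊t j⌋ • x j + ∑ j ∈ s, x j := by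
  classical
  refine ⟨({j | ⌊t j⌋ < ⌊t j + w j⌋} : Finset J), fun j hj ↦ by simp [hj], ?_⟩
  rw [Finset.sum_filter, ← Finset.sum_add_distrib]
  refine Finset.sum_congr rfl fun j _ ↦ ?_
  have hle : ⌊t j + w j⌋ ≤ ⌊t j⌋ + 1 := by
    rw [← Int.floor_add_one]
    exact Int.floor_le_floor (by linarith [(hw j).2])
  split_ifs with hj
  · rw [le_antisymm hle hj, add_one_zsmul]
  · have hge : ⌊t j⌋ ≤ ⌊t j + w j⌋ := Int.floor_le_floor (by linarith [(hw j).1])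
    rw [hge.antisymm (not_lt.1 hj), add_zero]

end Separation

section PositiveElements

open scoped Finset

variable {G H J : Type*} [AddCommGroup G] {Γ : Finset (AddChar G ℂ)}

theorem norm_bohrVec_sum_le [Finite G] {s : Finset J} {x : J → G}
    (h : ∑ j ∈ s, ‖bohrVec Γ (x j)‖ < 1 / 2) :
    ‖bohrVec Γ (∑ j ∈ s, x j)‖ ≤ ∑ j ∈ s, ‖bohrVec Γ (x j)‖ := by
  have hsum := bohrVec_sum_zsmul (Γ := Γ) (s := s) (c := 1) (x := x)
    (by simpa using (norm_sum_le _ _).trans_lt h)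
  simp only [Pi.one_apply, one_zsmul] at hsum
  exact hsum ▸ norm_sum_le _ _

variable [Fintype G] [AddCommGroup H] {l : G → H}

theorem IsLocalAddHom.map_sum (hl : IsLocalAddHom (bohrSet Γ (1 / 4) : Set G) l) {s : Finset J}
    {x : J → G} (h : ∑ j ∈ s, ‖bohrVec Γ (x j)‖ ≤ 1 / 4) :
    l (∑ j ∈ s, x j) = ∑ j ∈ s, l (x j) := by
  classical
  induction s using Finset.induction_on with
  | empty => simpa using hl.map_zero (by simp)
  | insert a s ha ih =>
    have hsum := norm_bohrVec_sum_le (h.trans_lt (by norm_num))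
    rw [Finset.sum_insert ha] at h hsum
    have hs : ∑ j ∈ s, ‖bohrVec Γ (x j)‖ ≤ 1 / 4 := by linarith [norm_nonneg (bohrVec Γ (x a))]
    have hs' := norm_bohrVec_sum_le (hs.trans_lt (by norm_num))
    have ha' : 0 ≤ ∑ j ∈ s, ‖bohrVec Γ (x j)‖ := by positivity
    rw [Finset.sum_insert ha] at hsum ⊢
    rw [Finset.sum_insert ha, ← ih hs]
    apply hl <;> simp only [Finset.mem_coe, mem_bohrSet] <;> linarith

variable [LinearOrder H] [IsOrderedAddMonoid H]

/-- If the combination were closer to `0`, then rounding the coefficients of its first multiples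
would give more than `|G|` elements of the Bohr set on which `l` is strictly increasing. -/
theorem one_lt_mul_norm_sum_smul_bohrVec [Fintype J]
    (hl : IsLocalAddHom (bohrSet Γ (1 / 4) : Set G) l) {x : J → G}
    (hx : ∑ j, ‖bohrVec Γ (x j)‖ ≤ 1 / 8) (hpos : ∀ j, 0 < l (x j)) {w : J → ℝ}
    (hw : ∀ j, w j ∈ Set.Icc 0 1) {j₀ : J} (hj₀ : w j₀ = 1) :
    1 < 8 * Fintype.card G * ‖∑ j, w j • bohrVec Γ (x j)‖ := by
  by_contra! hnear
  let b (q : ℕ) : G := ∑ j, ⌊q * w j⌋ • x j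
  have hb {q : ℕ} (hq : q ≤ Fintype.card G) : b q ∈ bohrSet Γ (1 / 4) := by
    have hnorm : ‖∑ j, ⌊q * w j⌋ • bohrVec Γ (x j)‖ ≤ 1 / 4 := by
      have hmul : (q : ℝ) * ‖∑ j, w j • bohrVec Γ (x j)‖ ≤ 1 / 8 := by
        have : (q : ℝ) ≤ Fintype.card G := by exact_mod_cast hq
        nlinarith [norm_nonneg (∑ j, w j • bohrVec Γ (x j))]
      have hround := norm_sum_floor_zsmul_le Finset.univ (q * w ·) (bohrVec Γ <| x ·)
      simp only [mul_smul, ← Finset.smul_sum, norm_smul, Real.norm_natCast] at hround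
      linarith
    rwa [mem_bohrSet, bohrVec_sum_zsmul (hnorm.trans_lt (by norm_num))]
  have hstep {q : ℕ} (hq : q < Fintype.card G) : l (b q) < l (b (q + 1)) := by
    obtain ⟨s, hs, hbs⟩ := exists_sum_floor_add_zsmul_eq hw (q * w ·) x
    have hbq : b (q + 1) = b q + ∑ j ∈ s, x j := by simpa [b, add_one_mul] using hbs
    have hsx : ∑ j ∈ s, ‖bohrVec Γ (x j)‖ ≤ 1 / 8 :=
      (Finset.sum_le_univ_sum_of_nonneg fun _ ↦ norm_nonneg _).trans hx
    have hsum : ∑ j ∈ s, x j ∈ bohrSet Γ (1 / 4) :=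
      mem_bohrSet.2 ((norm_bohrVec_sum_le (by linarith)).trans (by linarith))
    have hadd : l (b (q + 1)) = l (b q) + ∑ j ∈ s, l (x j) := by
      rw [hbq, hl (b q) (hb hq.le) _ hsum (hbq ▸ hb hq), hl.map_sum (s := s) (by linarith)]
    rw [hadd]
    exact lt_add_of_pos_right _ (Finset.sum_pos (fun j _ ↦ hpos j) ⟨j₀, hs j₀ hj₀⟩)
  have hmono : StrictMono fun q : Fin (Fintype.card G + 1) ↦ l (b q) :=
    Fin.strictMono_iff_lt_succ.2 fun q ↦ hstep q.2
  have hinj : Function.Injective fun q : Fin (Fintype.card G + 1) ↦ b q :=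
    Function.Injective.of_comp hmono.injective
  simpa using Fintype.card_le_of_injective _ hinj

theorem one_lt_mul_norm_convexCombination_bohrVec [Fintype J]
    (hl : IsLocalAddHom (bohrSet Γ (1 / 4) : Set G) l) {x : J → G}
    (hx : ∑ j, ‖bohrVec Γ (x j)‖ ≤ 1 / 8) (hpos : ∀ j, 0 < l (x j)) {p : J → ℝ}
    (hp : ∀ j, 0 ≤ p j) (hsum : ∑ j, p j = 1) :
    1 < 8 * Fintype.card J * Fintype.card G * ‖∑ j, p j • bohrVec Γ (x j)‖ := by
  obtain ⟨j₀, -⟩ : ∃ j ∈ Finset.univ, p j ≠ 0 :=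
    Finset.exists_ne_zero_of_sum_ne_zero (by simp [hsum])
  have : Nonempty J := ⟨j₀⟩
  obtain ⟨j₁, hj₁⟩ := Finite.exists_max p
  have hlarge : 1 ≤ Fintype.card J * p j₁ := by
    rw [← hsum, ← nsmul_eq_mul]
    exact Finset.sum_le_card_nsmul _ _ _ fun j _ ↦ hj₁ j
  have hp₁ : 0 < p j₁ := by
    by_contra! hle
    nlinarith [(Fintype.card J).cast_nonneg (α := ℝ)]
  have hw (j : J) : p j / p j₁ ∈ Set.Icc 0 1 :=
    ⟨div_nonneg (hp j) hp₁.le, (div_le_one hp₁).2 (hj₁ j)⟩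
  have h := one_lt_mul_norm_sum_smul_bohrVec hl hx hpos hw (div_self hp₁.ne')
  simp only [div_eq_inv_mul (_ : ℝ) (p j₁), mul_smul, ← Finset.smul_sum] at h
  rw [norm_smul, norm_inv, Real.norm_of_nonneg hp₁.le] at h
  calc 1 ≤ Fintype.card J * p j₁ := hlarge
    _ < Fintype.card J * p j₁ * (8 * Fintype.card G * ((p j₁)⁻¹ * _)) :=
      lt_mul_of_one_lt_right (by positivity) h
    _ = _ := by field_simp

theorem exists_strongDual_one_le_bohrVec (hl : IsLocalAddHom (bohrSet Γ (1 / 4) : Set G) l) :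
    ∃ g : StrongDual ℝ (Γ → ℝ), ‖g‖ ≤ 8 * (#Γ + 1) * Fintype.card G ∧
      ∀ x ∈ bohrSet Γ (1 / (8 * (#Γ + 1))), 0 < l x → 1 ≤ g (bohrVec Γ x) := by
  set P : Set (Γ → ℝ) := bohrVec Γ '' {x | x ∈ bohrSet Γ (1 / (8 * (#Γ + 1))) ∧ 0 < l x} with hP
  have hfar : ∀ z ∈ convexHull ℝ P, 1 / (8 * (#Γ + 1) * Fintype.card G) ≤ ‖z‖ := by
    intro z hz
    obtain ⟨J, _, v, p, hv, hindep, hp, hp1, rfl⟩ := eq_pos_convex_span_of_mem_convexHull hz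
    choose x hx hxv using fun j ↦ hv ⟨j, rfl⟩
    have hJ : (Fintype.card J : ℝ) ≤ #Γ + 1 := by
      have h := hindep.card_le_finrank_succ.trans
        (Nat.succ_le_succ (Submodule.finrank_le (vectorSpan ℝ (Set.range v))))
      simp only [Module.finrank_fintype_fun_eq_card, Fintype.card_coe] at h
      exact_mod_cast h
    have hsmall : ∑ j, ‖bohrVec Γ (x j)‖ ≤ 1 / 8 := by
      calc ∑ j, ‖bohrVec Γ (x j)‖ ≤ ∑ _j : J, 1 / (8 * (#Γ + 1) : ℝ) :=
            Finset.sum_le_sum fun j _ ↦ mem_bohrSet.1 (hx j).1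
        _ = Fintype.card J * (1 / (8 * (#Γ + 1))) := by simp
        _ ≤ (#Γ + 1) * (1 / (8 * (#Γ + 1))) := by gcongr
        _ = 1 / 8 := by field_simp
    rw [div_le_iff₀' (by positivity)]
    calc 1 ≤ 8 * Fintype.card J * Fintype.card G * ‖∑ j, p j • bohrVec Γ (x j)‖ :=
          (one_lt_mul_norm_convexCombination_bohrVec hl hsmall (fun j ↦ (hx j).2)
            (fun j ↦ (hp j).le) hp1).le
      _ = 8 * Fintype.card J * Fintype.card G * ‖∑ j, p j • v j‖ := by simp only [hxv]
      _ ≤ 8 * (#Γ + 1) * Fintype.card G * ‖∑ j, p j • v j‖ := by gcongr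
  obtain ⟨g, hg, hnorm⟩ :=
    exists_strongDual_one_le_of_le_norm (convex_convexHull ℝ P) (by positivity) hfar
  refine ⟨g, by simpa using hnorm, fun x hx hlx ↦ hg _ (subset_convexHull ℝ P ⟨x, ⟨hx, hlx⟩, rfl⟩)⟩

end PositiveElements

section QuasiHom

open scoped Finset

variable {H : Type*} [AddCommGroup H] [LinearOrder H]

theorem exists_card_mul_card_le_card_sub_mul_card {A S : Finset H} (hA : A.Nonempty)
    (hS : S.Nonempty) : ∃ t, #A * #S ≤ #(A - S) * #{a ∈ A | a - t ∈ S} := by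
  obtain ⟨t, -, ht⟩ := exists_card_le_card_mul_card_fiber (s := A ×ˢ S) (t := A - S)
    (f := fun p ↦ p.1 - p.2) (fun p hp ↦ Finset.sub_mem_sub (Finset.mem_product.1 hp).1
      (Finset.mem_product.1 hp).2) (hA.sub hS)
  refine ⟨t, (Finset.card_product A S).symm.le.trans (ht.trans (Nat.mul_le_mul_left _ ?_))⟩
  refine Finset.card_le_card_of_injOn Prod.fst ?_ ?_
  · rintro ⟨a, b⟩ hab
    simp only [Finset.coe_filter, Finset.mem_product, Set.mem_ofPred_eq] at hab ⊢
    obtain ⟨⟨ha, hb⟩, rfl⟩ := hab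
    simpa [ha] using hb
  · rintro ⟨a, b⟩ hab ⟨a', b'⟩ hab' (rfl : a = a')
    simp only [Finset.coe_filter, Set.mem_ofPred_eq] at hab hab'
    rw [sub_right_injective (hab.2.trans hab'.2.symm)]

/-- A real-valued function which is additive on `S` and which increases by at least `1` between any
two elements of `S + S`. -/
structure IsHeight (S : Set H) (θ : H → ℝ) : Prop where
  map_add : ∀ u ∈ S, ∀ v ∈ S, θ (u + v) = θ u + θ v
  add_one_le : ∀ u ∈ S + S, ∀ v ∈ S + S, u < v → θ u + 1 ≤ θ v

theorem IsHeight.strictMonoOn_floor {S : Set H} {θ : H → ℝ} (hθ : IsHeight S θ) :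
    StrictMonoOn (fun u ↦ ⌊θ u⌋) (S + S) := by
  intro u hu v hv huv
  rw [← Int.add_one_le_iff, ← Int.floor_add_one]
  exact Int.floor_le_floor (hθ.add_one_le u hu v hv huv)

/-- A strictly increasing map `f` on `A` which is additive up to an error of `1`: the sums `a + b`
have images `h (a + b)` which differ from `f a + f b` by at most `1` and determine `a + b`. -/
structure IsStrictMonoQuasiHom (A : Finset H) (f h : H → ℤ) : Prop where
  strictMonoOn : StrictMonoOn f A
  add_le : ∀ a ∈ A, ∀ b ∈ A, f a + f b ≤ h (a + b)
  le_add_one : ∀ a ∈ A, ∀ b ∈ A, h (a + b) ≤ f a + f b + 1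
  injOn : Set.InjOn h (A + A : Finset H)

theorem IsHeight.isStrictMonoQuasiHom [IsOrderedAddMonoid H] {S : Set H} {θ : H → ℝ}
    (hθ : IsHeight S θ) (h0 : 0 ∈ S) {A : Finset H} {t : H} (hA : ∀ a ∈ A, a - t ∈ S) :
    IsStrictMonoQuasiHom A (fun a ↦ ⌊θ (a - t)⌋) (fun s ↦ ⌊θ (s - (t + t))⌋) where
  strictMonoOn a ha b hb hab :=
    hθ.strictMonoOn_floor (Set.subset_add_left S h0 (hA a ha)) (Set.subset_add_left S h0 (hA b hb))
      (sub_lt_sub_right hab t)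
  add_le a ha b hb := by
    rw [add_sub_add_comm, hθ.map_add _ (hA a ha) _ (hA b hb)]
    exact Int.le_floor_add _ _
  le_add_one a ha b hb := by
    rw [add_sub_add_comm, hθ.map_add _ (hA a ha) _ (hA b hb)]
    linarith [Int.le_floor_add_floor (θ (a - t)) (θ (b - t))]
  injOn := by
    have hmem {s : H} (hs : s ∈ A + A) : s - (t + t) ∈ S + S := by
      obtain ⟨a, ha, b, hb, rfl⟩ := Finset.mem_add.1 hs
      exact add_sub_add_comm a b t t ▸ Set.add_mem_add (hA a ha) (hA b hb)
    intro s hs s' hs' h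
    exact sub_left_injective (hθ.strictMonoOn_floor.injOn (hmem hs) (hmem hs') h)

end QuasiHom

section BohrModel

open scoped Finset

variable {G H : Type*} [AddCommGroup G] [Fintype G] [AddCommGroup H] [LinearOrder H]
  {Γ : Finset (AddChar G ℂ)} {l : G → H} {A : Finset H}

/-- An injective and locally additive parametrization of a part of `2A - 2A` by a Bohr set. -/
structure IsBohrModel (Γ : Finset (AddChar G ℂ)) (l : G → H) (A : Finset H) : Prop where
  isLocalAddHom : IsLocalAddHom (bohrSet Γ (1 / 4) : Set G) l
  mapsTo : Set.MapsTo l (bohrSet Γ (1 / 4)) (2 • A - 2 • A : Finset H)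
  injOn : Set.InjOn l (bohrSet Γ (1 / 4))

variable [IsOrderedAddMonoid H]

theorem IsLocalAddHom.add_one_le_of_lt (hl : IsLocalAddHom (bohrSet Γ (1 / 4) : Set G) l) {σ : ℝ}
    (hσ : σ + σ ≤ 1 / 4) {g : StrongDual ℝ (Γ → ℝ)}
    (hg : ∀ x ∈ bohrSet Γ (σ + σ), 0 < l x → 1 ≤ g (bohrVec Γ x)) {x y : G}
    (hx : x ∈ bohrSet Γ σ) (hy : y ∈ bohrSet Γ σ) (hxy : l x < l y) :
    g (bohrVec Γ x) + 1 ≤ g (bohrVec Γ y) := by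
  have hσ0 : 0 ≤ σ := (norm_nonneg _).trans (mem_bohrSet.1 hx)
  have hsub : bohrSet Γ σ ⊆ bohrSet Γ (1 / 4) := bohrSet_mono (by linarith)
  have hdiff : y - x ∈ bohrSet Γ (σ + σ) := sub_mem_bohrSet (by linarith) hy hx
  have hmap := hl (y - x) (bohrSet_mono hσ hdiff) x (hsub hx) (by simpa using hsub hy)
  rw [sub_add_cancel] at hmap
  have hone := hg (y - x) hdiff (by rwa [hmap, lt_add_iff_pos_left] at hxy)
  rw [bohrVec_sub, map_sub] at hone
  · linarith
  · exact (norm_sub_le_of_le (mem_bohrSet.1 hy) (mem_bohrSet.1 hx)).trans_lt (by linarith)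

theorem exists_isHeight_image (hl : IsLocalAddHom (bohrSet Γ (1 / 4) : Set G) l)
    (hinj : Set.InjOn l (bohrSet Γ (1 / 4))) {ρ : ℝ} (hρ : 32 * (#Γ + 1) * ρ = 1) :
    ∃ θ : H → ℝ, IsHeight (l '' bohrSet Γ ρ) θ ∧
      ∀ u ∈ l '' bohrSet Γ ρ, |θ u| ≤ Fintype.card G := by
  have hρ0 : 0 < ρ := by_contra fun h ↦ by nlinarith [(#Γ).cast_nonneg (α := ℝ)]
  have hρle : ρ ≤ 1 / 32 := by nlinarith [(#Γ).cast_nonneg (α := ℝ)]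
  obtain ⟨g, hnorm, hg⟩ := exists_strongDual_one_le_bohrVec hl
  rw [show 1 / (8 * (#Γ + 1)) = ρ + ρ + (ρ + ρ) by field_simp; linarith] at hg
  let θ (u : H) : ℝ := g (bohrVec Γ (Function.invFunOn l (bohrSet Γ (1 / 4)) u))
  have hθ {x : G} (hx : x ∈ bohrSet Γ (1 / 4)) : θ (l x) = g (bohrVec Γ x) := by
    simp only [θ, hinj.leftInvOn_invFunOn hx]
  have hsub : bohrSet Γ ρ ⊆ bohrSet Γ (1 / 4) := bohrSet_mono (by linarith)
  have hsub2 : bohrSet Γ (ρ + ρ) ⊆ bohrSet Γ (1 / 4) := bohrSet_mono (by linarith)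
  have hadd {x y : G} (hx : x ∈ bohrSet Γ ρ) (hy : y ∈ bohrSet Γ ρ) :
      x + y ∈ bohrSet Γ (ρ + ρ) ∧ l x + l y = l (x + y) :=
    have hxy := add_mem_bohrSet (by linarith) hx hy
    ⟨hxy, (hl x (hsub hx) y (hsub hy) (hsub2 hxy)).symm⟩
  refine ⟨θ, ⟨?_, ?_⟩, ?_⟩
  · rintro _ ⟨x, hx, rfl⟩ _ ⟨y, hy, rfl⟩
    obtain ⟨hxy, hlxy⟩ := hadd hx hy
    rw [hlxy, hθ (hsub hx), hθ (hsub hy), hθ (hsub2 hxy), bohrVec_add, map_add]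
    exact (norm_add_le_of_le (mem_bohrSet.1 hx) (mem_bohrSet.1 hy)).trans_lt (by linarith)
  · rintro _ ⟨_, ⟨x, hx, rfl⟩, _, ⟨x', hx', rfl⟩, rfl⟩ _ ⟨_, ⟨y, hy, rfl⟩, _, ⟨y', hy', rfl⟩, rfl⟩
    obtain ⟨hxx, hlx⟩ := hadd hx hx'
    obtain ⟨hyy, hly⟩ := hadd hy hy'
    simp only [hlx, hly, hθ (hsub2 hxx), hθ (hsub2 hyy)]
    exact hl.add_one_le_of_lt (by linarith) hg hxx hyy
  · rintro _ ⟨x, hx, rfl⟩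
    rw [hθ (hsub hx), ← Real.norm_eq_abs]
    calc ‖g (bohrVec Γ x)‖ ≤ 8 * (#Γ + 1) * Fintype.card G * ρ :=
          g.le_of_opNorm_le_of_le hnorm (mem_bohrSet.1 hx)
      _ ≤ 32 * (#Γ + 1) * ρ * Fintype.card G := by
          nlinarith [show (0 : ℝ) ≤ #Γ * Fintype.card G by positivity]
      _ = Fintype.card G := by rw [hρ, one_mul]

theorem IsBohrModel.exists_isStrictMonoQuasiHom (hA : A.Nonempty) (hl : IsBohrModel Γ l A) :
    ∃ A' ⊆ A, ∃ f h : H → ℤ, IsStrictMonoQuasiHom A' f h ∧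
      (∀ a ∈ A', |f a| ≤ Fintype.card G) ∧
      #A * #(bohrSet Γ (1 / (32 * (#Γ + 1)))) ≤ #(3 • A - 2 • A) * #A' := by
  obtain ⟨ρ, hρ⟩ : ∃ ρ : ℝ, ρ = 1 / (32 * (#Γ + 1)) := ⟨_, rfl⟩
  have hρ1 : 32 * (#Γ + 1) * ρ = 1 := by rw [hρ]; field_simp
  have hsub : bohrSet Γ ρ ⊆ bohrSet Γ (1 / 4) :=
    bohrSet_mono (by nlinarith [(#Γ).cast_nonneg (α := ℝ)])
  have h0 : (0 : G) ∈ bohrSet Γ ρ := by rw [mem_bohrSet, bohrVec_zero, norm_zero, hρ]; positivity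
  obtain ⟨θ, hθ, hbound⟩ := exists_isHeight_image hl.isLocalAddHom hl.injOn hρ1
  rw [← hρ]
  obtain ⟨t, ht⟩ := exists_card_mul_card_le_card_sub_mul_card hA (S := (bohrSet Γ ρ).image l)
    ⟨_, Finset.mem_image_of_mem l h0⟩
  have hmem : ∀ a ∈ {a ∈ A | a - t ∈ (bohrSet Γ ρ).image l}, a - t ∈ l '' bohrSet Γ ρ := by
    intro a ha
    exact_mod_cast (Finset.mem_filter.1 ha).2
  have h0' : (0 : H) ∈ l '' bohrSet Γ ρ := ⟨0, h0, hl.isLocalAddHom.map_zero (by simp)⟩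
  refine ⟨_, Finset.filter_subset _ A, _, _, hθ.isStrictMonoQuasiHom h0' hmem, ?_, ?_⟩
  · intro a ha
    obtain ⟨hlow, hhigh⟩ := abs_le.1 (hbound _ (hmem a ha))
    refine abs_le.2 ⟨Int.le_floor.2 (by exact_mod_cast hlow), ?_⟩
    exact_mod_cast (Int.floor_le _).trans hhigh
  · rw [Finset.card_image_of_injOn (hl.injOn.mono hsub)] at ht
    refine ht.trans (Nat.mul_le_mul_right _ (Finset.card_le_card ?_))
    have himage : (bohrSet Γ ρ).image l ⊆ 2 • A - 2 • A :=
      Finset.image_subset_iff.2 fun x hx ↦ hl.mapsTo (hsub hx)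
    calc A - (bohrSet Γ ρ).image l ⊆ A - (2 • A - 2 • A) := Finset.sub_subset_sub_left himage
      _ = 3 • A - 2 • A := by rw [sub_sub_eq_add_sub, succ_nsmul' A 2]

end BohrModel

section Freiman

open scoped Finset

theorem mem_nsmul_iff_exists_multiset {G : Type*} [AddCommMonoid G] [DecidableEq G] {A : Finset G}
    {n : ℕ} {x : G} :
    x ∈ n • A ↔ ∃ s : Multiset G, (∀ ⦃a⦄, a ∈ s → a ∈ A) ∧ s.card = n ∧ s.sum = x := by
  rw [← Finset.mem_coe, Finset.coe_nsmul]
  constructor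
  · intro hx
    obtain ⟨a, ha, rfl⟩ := Set.mem_nsmul_iff_sum.1 hx
    exact ⟨Finset.univ.val.map a, by simpa using ha, by simp, rfl⟩
  · rintro ⟨s, hs, rfl, rfl⟩
    have := Set.multiset_sum_mem_multiset_sum s (fun _ ↦ (A : Set G)) id hs
    rwa [Multiset.map_const', Multiset.sum_replicate, Multiset.map_id] at this

variable {G H : Type*} [AddCommGroup G] [AddCommGroup H]

theorem mem_nsmul_sub_nsmul_iff_exists_multiset [DecidableEq G] {A : Finset G} {n : ℕ} {x : G} :
    x ∈ n • A - n • A ↔ ∃ s t : Multiset G, (∀ ⦃a⦄, a ∈ s → a ∈ A) ∧ (∀ ⦃a⦄, a ∈ t → a ∈ A) ∧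
      s.card = n ∧ t.card = n ∧ s.sum - t.sum = x := by
  simp only [Finset.mem_sub, mem_nsmul_iff_exists_multiset]
  grind

theorem exists_isLocalAddHom_of_isAddFreimanIso [DecidableEq G] [DecidableEq H]
    {A : Finset H} {B : Finset G} {n : ℕ} {f : G → H}
    (hf : IsAddFreimanIso (n + n + n) (B : Set G) A f) :
    ∃ l : G → H, IsLocalAddHom (n • B - n • B : Finset G) l ∧
      Set.MapsTo l (n • B - n • B : Finset G) (n • A - n • A : Finset H) ∧
      Set.InjOn l (n • B - n • B : Finset G) := by
  choose! P N hP hN hPcard hNcard hsum using fun (x : G) (hx : x ∈ n • B - n • B) ↦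
    mem_nsmul_sub_nsmul_iff_exists_multiset.1 hx
  have hmap {s : Multiset G} (hs : ∀ ⦃a⦄, a ∈ s → a ∈ B) : ∀ ⦃a⦄, a ∈ s.map f → a ∈ A := by
    simp only [Multiset.mem_map]
    rintro _ ⟨a, ha, rfl⟩
    exact hf.bijOn.mapsTo (hs ha)
  refine ⟨fun x ↦ ((P x).map f).sum - ((N x).map f).sum, fun x hx y hy hxy ↦ ?_, fun x hx ↦ ?_,
    fun x hx y hy hxy ↦ ?_⟩
  · have h := hf.map_sum_eq_map_sum (s := P (x + y) + N x + N y) (t := N (x + y) + P x + P y)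
      (by grind) (by grind) (by grind [Multiset.card_add]) (by grind [Multiset.card_add])
    simp only [Multiset.map_add, Multiset.sum_add] at h
    grind
  · exact mem_nsmul_sub_nsmul_iff_exists_multiset.2 ⟨_, _, hmap (hP x hx), hmap (hN x hx),
      by rw [Multiset.card_map, hPcard x hx], by rw [Multiset.card_map, hNcard x hx], rfl⟩
  · have h := (hf.mono (m := n + n) (hmn := by lia)).map_sum_eq_map_sum (s := P x + N y)
      (t := P y + N x) (by grind) (by grind) (by grind [Multiset.card_add])
      (by grind [Multiset.card_add])
    simp only [Multiset.map_add, Multiset.sum_add] at h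
    rwa [← hsum x hx, ← hsum y hy, sub_eq_sub_iff_add_eq_add, ← h, ← sub_eq_sub_iff_add_eq_add]

end Freiman

section ModelLemma

open scoped Finset

theorem isAddFreimanIso_image {G H : Type*} [AddCommMonoid G] [IsAddTorsionFree G]
    [AddCommMonoid H] {n : ℕ} (hn : n ≠ 0) {A : Set G} {f : G → H}
    (hf : ∀ ⦃s t : Multiset G⦄, (∀ ⦃x⦄, x ∈ s → x ∈ A) → (∀ ⦃x⦄, x ∈ t → x ∈ A) →
      s.card = n → t.card = n → ((s.map f).sum = (t.map f).sum ↔ s.sum = t.sum)) :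
    IsAddFreimanIso n A (f '' A) f where
  bijOn := by
    refine Set.InjOn.bijOn_image fun a ha b hb hab ↦ nsmul_right_injective hn ?_
    have := hf (s := .replicate n a) (t := .replicate n b)
      (fun x hx ↦ Multiset.eq_of_mem_replicate hx ▸ ha)
      (fun x hx ↦ Multiset.eq_of_mem_replicate hx ▸ hb) (by simp) (by simp)
    simpa [hab] using this
  map_sum_eq_map_sum := hf

theorem abs_sum_map_sub_sum_map_le {ι : Type*} {s t : Multiset ι} {f : ι → ℤ} {L w : ℤ}
    (hst : s.card = t.card) (hs : ∀ a ∈ s, f a ∈ Set.Icc L (L + w))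
    (ht : ∀ a ∈ t, f a ∈ Set.Icc L (L + w)) :
    |(s.map f).sum - (t.map f).sum| ≤ s.card * w := by
  have hbounds {r : Multiset ι} (hr : ∀ a ∈ r, f a ∈ Set.Icc L (L + w)) :
      r.card * L ≤ (r.map f).sum ∧ (r.map f).sum ≤ r.card * L + r.card * w := by
    have hlow := Multiset.card_nsmul_le_sum (s := r.map f) (a := L)
    have hhigh := Multiset.sum_le_card_nsmul (r.map f) (L + w)
    simp only [Multiset.forall_mem_map_iff, Multiset.card_map, nsmul_eq_mul, mul_add] at hlow hhigh
    exact ⟨hlow fun a ha ↦ (hr a ha).1, hhigh fun a ha ↦ (hr a ha).2⟩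
  have := hbounds hs
  have := hbounds ht
  rw [← hst] at this
  exact abs_le.2 ⟨by linarith, by linarith⟩

theorem exists_forall_intCast_ne_mul {p m : ℕ} [Fact p.Prime] {S : Finset (ZMod p)} (h0 : 0 ∉ S)
    (hm : 2 * #S < m) :
    ∃ u : ZMod p, ∀ x ∈ S, ∀ d : ℤ, |d| < p → (m : ℤ) ∣ d → (d : ZMod p) ≠ u * x := by
  have hm0 : 0 < m := by lia
  have hp := (Fact.out : p.Prime).two_le
  let E := (p - 1) / m
  let I : Finset ℤ := (Finset.Icc (-(E : ℤ)) E).erase 0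
  let bad : Finset (ZMod p) := (I ×ˢ S).image fun q ↦ ((m * q.1 : ℤ) : ZMod p) / q.2
  have hbad : #bad < #(Finset.univ.erase (0 : ZMod p)) := by
    have hI : #I = 2 * E := by
      rw [Finset.card_erase_of_mem (by simp), Int.card_Icc]
      lia
    have hcard : #bad ≤ 2 * E * #S := by
      rw [← hI, ← Finset.card_product]
      exact Finset.card_image_le
    have hE : E * m ≤ p - 1 := Nat.div_mul_le_self _ _
    rw [Finset.card_erase_of_mem (Finset.mem_univ _), Finset.card_univ, ZMod.card]
    rcases E.eq_zero_or_pos with hE0 | hEpos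
    · simp only [hE0, mul_zero, zero_mul] at hcard
      lia
    · nlinarith
  obtain ⟨u, hu0, hu⟩ := Finset.exists_mem_notMem_of_card_lt_card hbad
  have hu0 : u ≠ 0 := Finset.ne_of_mem_erase hu0
  refine ⟨u, fun x hx d hd ⟨e, he⟩ hdu ↦ hu (Finset.mem_image.2 ⟨(e, x), ?_, ?_⟩)⟩
  · refine Finset.mem_product.2 ⟨Finset.mem_erase.2 ⟨?_, Finset.mem_Icc.2 (abs_le.1 ?_)⟩, hx⟩
    · rintro rfl
      rw [he, mul_zero, Int.cast_zero, eq_comm, mul_eq_zero, or_iff_right hu0] at hdu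
      exact h0 (hdu ▸ hx)
    · rw [he, abs_mul, Nat.abs_cast] at hd
      have : m * e.natAbs < p := by zify; exact hd
      rw [Int.abs_eq_natAbs, Nat.cast_le, Nat.le_div_iff_mul_le hm0, mul_comm]
      lia
  · rw [← he, hdu, mul_div_cancel_right₀]
    rintro rfl
    exact h0 hx

theorem isAddFreimanIso_intCast {p m n : ℕ} (hn : n ≠ 0) {A : Finset ℤ} {π : ℤ → ℤ} {u : ZMod p}
    (hπ : ∀ a, (π a : ZMod p) = u * a) {L w : ℤ} (hw : n * w < p)
    (hL : ∀ a ∈ A, π a ∈ Set.Icc L (L + w))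
    (hu : ∀ x ∈ n • A - n • A, x ≠ 0 → ∀ d : ℤ, |d| < p → (m : ℤ) ∣ d →
      (d : ZMod p) ≠ u * x) :
    IsAddFreimanIso n (A : Set ℤ) ((fun a ↦ (π a : ZMod m)) '' A) (fun a ↦ (π a : ZMod m)) := by
  refine isAddFreimanIso_image hn fun s t hs ht hsn htn ↦ ?_
  have hcast (q : ℕ) (r : Multiset ℤ) :
      (r.map fun a ↦ (π a : ZMod q)).sum = ((r.map π).sum : ℤ) := by
    rw [Int.cast_multiset_sum, Multiset.map_map, Function.comp_def]
  obtain ⟨d, hd⟩ : ∃ d, d = (s.map π).sum - (t.map π).sum := ⟨_, rfl⟩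
  have hdp : |d| < p := by
    rw [hd]
    refine (abs_sum_map_sub_sum_map_le (hsn.trans htn.symm) (fun a ha ↦ hL a (hs ha))
      fun a ha ↦ hL a (ht ha)).trans_lt (hsn ▸ hw)
  have hdu : (d : ZMod p) = u * (s.sum - t.sum : ℤ) := by
    have hsum (r : Multiset ℤ) : ((r.map π).sum : ZMod p) = u * (r.sum : ℤ) := by
      simp only [← hcast, hπ, Multiset.sum_map_mul_left, Int.cast_multiset_sum]
    rw [hd, Int.cast_sub, hsum, hsum, Int.cast_sub, mul_sub]
  rw [hcast, hcast, ← sub_eq_zero, ← Int.cast_sub, ← hd, ZMod.intCast_zmod_eq_zero_iff_dvd]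
  constructor
  · intro hmd
    by_contra hne
    exact hu _ (mem_nsmul_sub_nsmul_iff_exists_multiset.2 ⟨s, t, hs, ht, hsn, htn, rfl⟩)
      (sub_ne_zero.2 hne) d hdp hmd hdu
  · intro hst
    rw [hst, sub_self, Int.cast_zero, mul_zero, ZMod.intCast_zmod_eq_zero_iff_dvd] at hdu
    rw [Int.eq_zero_of_abs_lt_dvd hdu hdp]
    exact dvd_zero _

theorem exists_prime_forall_intCast_ne_zero (S : Finset ℤ) :
    ∃ p : ℕ, p.Prime ∧ ∀ x ∈ S, x ≠ 0 → (x : ZMod p) ≠ 0 := by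
  obtain ⟨p, hle, hp⟩ := Nat.exists_infinite_primes (S.sup Int.natAbs + 1)
  refine ⟨p, hp, fun x hx hx0 h ↦ hx0 ?_⟩
  rw [ZMod.intCast_zmod_eq_zero_iff_dvd] at h
  have := Finset.le_sup (f := Int.natAbs) hx
  exact Int.eq_zero_of_abs_lt_dvd h (by rw [Int.abs_eq_natAbs]; lia)

/-- Ruzsa's model lemma: a typical dilation modulo a large prime `p` followed by reduction modulo
`m` works, once `A` is restricted to the elements whose dilate lies in a short enough interval. -/
theorem exists_isAddFreimanIso_zmod {m n : ℕ} (hn : n ≠ 0) {A : Finset ℤ}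
    (hm : 2 * #(n • A - n • A) < m) :
    ∃ A' ⊆ A, #A ≤ n * #A' ∧ ∃ φ : ℤ → ZMod m, IsAddFreimanIso n (A' : Set ℤ) (φ '' A') φ := by
  obtain ⟨p, hp, hS⟩ := exists_prime_forall_intCast_ne_zero (n • A - n • A)
  have : Fact p.Prime := ⟨hp⟩
  obtain ⟨u, hu⟩ := exists_forall_intCast_ne_mul (p := p) (m := m)
    (S := {x ∈ n • A - n • A | x ≠ 0}.image (↑)) (by simpa using hS)
    (((Nat.mul_le_mul_left 2 (Finset.card_image_le.trans (Finset.card_filter_le _ _)))).trans_lt hm)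
  let π (a : ℤ) : ℕ := (u * a).val
  let w : ℕ := (p - 1) / n
  have hw : p - 1 < n * (w + 1) := Nat.lt_mul_div_succ _ (Nat.pos_of_ne_zero hn)
  obtain ⟨j, -, hj⟩ := exists_card_le_card_mul_card_fiber (s := A) (t := Finset.range n)
    (f := fun a ↦ π a / (w + 1)) (fun a _ ↦ by
      have := ZMod.val_lt (u * (a : ZMod p))
      exact Finset.mem_range.2 (Nat.div_lt_of_lt_mul (by rw [mul_comm]; lia))) (by simpa using hn)
  rw [Finset.card_range] at hj
  refine ⟨_, Finset.filter_subset _ A, hj, fun a ↦ ((π a : ℤ) : ZMod m),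
    isAddFreimanIso_intCast hn (u := u) (L := j * (w + 1)) (w := w) (fun a ↦ by simp [π]) ?_ ?_ ?_⟩
  · have := Nat.mul_div_le (p - 1) n
    have := hp.pos
    zify at *
    lia
  · intro a ha
    obtain ⟨-, rfl⟩ := Finset.mem_filter.1 ha
    have := Nat.div_add_mod' (π a) (w + 1)
    have := Nat.mod_lt (π a) w.succ_pos
    zify at *
    constructor <;> lia
  · intro x hx hx0
    refine hu x (Finset.mem_image_of_mem _ (Finset.mem_filter.2 ⟨?_, hx0⟩))
    have hsub := Finset.nsmul_subset_nsmul_left (n := n)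
      (Finset.filter_subset (fun a ↦ π a / (w + 1) = j) A)
    exact Finset.sub_subset_sub hsub hsub hx

end ModelLemma

section SmallDoubling

open scoped Finset

theorem card_nsmul_sub_nsmul_le {G : Type*} [AddCommGroup G] [DecidableEq G] {A : Finset G}
    (hA : A.Nonempty) {K : ℝ} (hK : (#(A + A) : ℝ) ≤ K * #A) (a b : ℕ) :
    (#(a • A - b • A) : ℝ) ≤ K ^ (a + b) * #A := by
  have hplunnecke :=
    (NNRat.cast_le (K := ℝ)).2 (Finset.pluennecke_ruzsa_inequality_nsmul_sub_nsmul_add hA A a b)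
  push_cast at hplunnecke
  refine hplunnecke.trans ?_
  gcongr
  rwa [div_le_iff₀ (by positivity)]

theorem IsBohrModel.mono {G H : Type*} [AddCommGroup G] [Fintype G] [AddCommGroup H]
    [LinearOrder H] {Γ : Finset (AddChar G ℂ)} {l : G → H} {A A' : Finset H}
    (hl : IsBohrModel Γ l A) (hA : A ⊆ A') : IsBohrModel Γ l A' where
  isLocalAddHom := hl.isLocalAddHom
  mapsTo := hl.mapsTo.mono_right (Finset.coe_subset.2 (Finset.sub_subset_sub
    (Finset.nsmul_subset_nsmul_left hA) (Finset.nsmul_subset_nsmul_left hA)))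
  injOn := hl.injOn

theorem exists_isBohrModel_of_isAddFreimanIso {G H : Type*} [AddCommGroup G] [Fintype G]
    [AddCommGroup H] [LinearOrder H] {A : Finset H} {B : Finset G} (hB : B.Nonempty) {f : G → H}
    (hf : IsAddFreimanIso 6 (B : Set G) A f) :
    ∃ l : G → H, IsBohrModel (largeSpectrum B) l A := by
  classical
  obtain ⟨l, hl, hmaps, hinj⟩ := exists_isLocalAddHom_of_isAddFreimanIso (n := 2) hf
  have hsub := Finset.coe_subset.2 (bohrSet_largeSpectrum_subset hB)
  exact ⟨l, hl.mono hsub, hmaps.mono_left hsub, hinj.mono hsub⟩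

theorem exists_isBohrModel (K : ℝ) :
    ∃ C d : ℕ, ∀ A : Finset ℤ, A.Nonempty → (#(A + A) : ℝ) ≤ K * #A →
      ∃ (m : ℕ) (_ : NeZero m) (Γ : Finset (AddChar (ZMod m) ℂ)) (l : ZMod m → ℤ),
        #A ≤ m ∧ m ≤ C * #A ∧ #Γ ≤ d ∧ IsBohrModel Γ l A := by
  obtain ⟨C, hC⟩ := exists_nat_ge (2 * K ^ 12 + 1)
  refine ⟨C, 2 * (6 * C) ^ 2, fun A hA hK ↦ ?_⟩
  obtain ⟨m, hm⟩ : ∃ m, m = 2 * #(6 • A - 6 • A) + #A := ⟨_, rfl⟩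
  have hpos := hA.card_pos
  have : NeZero m := ⟨by lia⟩
  have hmC : (m : ℝ) ≤ C * #A := by
    calc (m : ℝ) = 2 * #(6 • A - 6 • A) + #A := by exact_mod_cast hm
      _ ≤ 2 * (K ^ 12 * #A) + #A := by gcongr; exact card_nsmul_sub_nsmul_le hA hK 6 6
      _ = (2 * K ^ 12 + 1) * #A := by ring
      _ ≤ C * #A := by gcongr
  obtain ⟨A', hA', hcard, φ, hφ⟩ := exists_isAddFreimanIso_zmod (m := m) (by simp)
    (show 2 * #(6 • A - 6 • A) < m by lia)
  have hA'0 : A'.Nonempty := Finset.card_pos.1 (by lia)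
  have hψ : IsAddFreimanIso 6 (A'.image φ : Set (ZMod m)) A' (Function.invFunOn φ A') := by
    rw [Finset.coe_image]
    exact hφ.invFunOn
  obtain ⟨l, hl⟩ := exists_isBohrModel_of_isAddFreimanIso (hA'0.image φ) hψ
  refine ⟨m, ‹_›, _, l, by lia, by exact_mod_cast hmC, ?_, hl.mono hA'⟩
  have hspectrum := card_largeSpectrum_le (hA'0.image φ)
  rw [Finset.card_image_of_injOn hφ.bijOn.injOn, ZMod.card] at hspectrum
  have hratio : (m : ℝ) / #A' ≤ 6 * C := by
    rw [div_le_iff₀ (by positivity)]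
    calc (m : ℝ) ≤ C * #A := hmC
      _ ≤ C * (6 * #A') := by gcongr; exact_mod_cast hcard
      _ = 6 * C * #A' := by ring
  exact_mod_cast hspectrum.trans (by gcongr : _ ≤ 2 * (6 * (C : ℝ)) ^ 2)

theorem exists_isStrictMonoQuasiHom {K : ℝ} (hK : 0 < K) :
    ∃ (c : ℝ) (X : ℕ), 0 < c ∧ ∀ A : Finset ℤ, A.Nonempty → (#(A + A) : ℝ) ≤ K * #A →
      ∃ A' ⊆ A, ∃ f h : ℤ → ℤ, c * #A ≤ #A' ∧ IsStrictMonoQuasiHom A' f h ∧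
        ∀ a ∈ A', |f a| ≤ X * #A := by
  obtain ⟨C, d, hmodel⟩ := exists_isBohrModel K
  obtain ⟨M, hM⟩ : ∃ M, M = (32 * (d + 1)) ^ d := ⟨_, rfl⟩
  have hM0 : 0 < M := by rw [hM]; positivity
  refine ⟨1 / (M * K ^ 5), C, by positivity, fun A hA hdoubling ↦ ?_⟩
  obtain ⟨m, _, Γ, l, hmA, hmC, hΓ, hl⟩ := hmodel A hA hdoubling
  obtain ⟨A', hA', f, h, hfh, hbound, hcard⟩ := hl.exists_isStrictMonoQuasiHom hA
  rw [ZMod.card] at hbound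
  refine ⟨A', hA', f, h, ?_, hfh, fun a ha ↦ (hbound a ha).trans (by exact_mod_cast hmC)⟩
  obtain ⟨B, hB⟩ : ∃ B, B = bohrSet Γ (1 / (32 * (#Γ + 1))) := ⟨_, rfl⟩
  rw [← hB] at hcard
  have hA_le : (#A : ℝ) ≤ M * #B := by
    have hbohr := card_le_pow_mul_card_bohrSet Γ (M := 32 * (#Γ + 1)) (by lia)
    push_cast at hbohr
    rw [ZMod.card, ← hB] at hbohr
    have hpow : (32 * (#Γ + 1)) ^ #Γ ≤ M := by
      rw [hM]
      exact (Nat.pow_le_pow_left (by lia) _).trans (Nat.pow_le_pow_right (by lia) hΓ)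
    exact_mod_cast hmA.trans (hbohr.trans (Nat.mul_le_mul_right _ hpow))
  have hB_le : (#B : ℝ) ≤ K ^ 5 * #A' := by
    refine le_of_mul_le_mul_left ?_ (show (0 : ℝ) < #A by positivity)
    calc (#A * #B : ℝ) ≤ #(3 • A - 2 • A) * #A' := by exact_mod_cast hcard
      _ ≤ K ^ 5 * #A * #A' := by gcongr; exact card_nsmul_sub_nsmul_le hA hdoubling 3 2
      _ = #A * (K ^ 5 * #A') := by ring
  rw [one_div, inv_mul_le_iff₀ (by positivity)]
  calc (#A : ℝ) ≤ M * #B := hA_le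
    _ ≤ M * (K ^ 5 * #A') := by gcongr
    _ = M * K ^ 5 * #A' := by ring

end SmallDoubling

section DiagonalFiber

open scoped Finset

variable {ι H : Type*} [Fintype ι] [DecidableEq ι] {A : ι → Finset H} {f : ι → H → ℤ} {s : ι → ℤ}

/-- The points of the product of the `A i` at which the values of the functions `f i` have the same
pairwise differences as the `s i`. -/
def diagonalFiber (A : ι → Finset H) (f : ι → H → ℤ) (s : ι → ℤ) : Finset (ι → H) :=
  {x ∈ Fintype.piFinset A | ∀ i j, f i (x i) - f j (x j) = s i - s j}

theorem diagonalFiber_subset : diagonalFiber A f s ⊆ Fintype.piFinset A :=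
  Finset.filter_subset _ _

theorem mem_diagonalFiber {x : ι → H} :
    x ∈ diagonalFiber A f s ↔
      (∀ i, x i ∈ A i) ∧ ∀ i j, f i (x i) - f j (x j) = s i - s j := by
  rw [diagonalFiber, Finset.mem_filter, Fintype.mem_piFinset]

theorem lt_of_mem_diagonalFiber [LinearOrder H] (hf : ∀ i, StrictMonoOn (f i) (A i)) {x y : ι → H}
    (hx : x ∈ diagonalFiber A f s) (hy : y ∈ diagonalFiber A f s) {i : ι} (hi : x i < y i)
    (j : ι) : x j < y j := by
  obtain ⟨hxA, hx⟩ := mem_diagonalFiber.1 hx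
  obtain ⟨hyA, hy⟩ := mem_diagonalFiber.1 hy
  have := hf i (hxA i) (hyA i) hi
  exact ((hf j).lt_iff_lt (hxA j) (hyA j)).1 (by linarith [hx i j, hy i j])

theorem isDiagonal_diagonalFiber {k : ℕ} {A : Fin k → Finset ℤ} {f : Fin k → ℤ → ℤ}
    (hf : ∀ i, StrictMonoOn (f i) (A i)) (s : Fin k → ℤ) : IsDiagonal (diagonalFiber A f s) := by
  intro x hx y hy hne
  simp only [sub_pos, sub_neg]
  obtain ⟨i, hi⟩ := Function.ne_iff.1 hne
  exact hi.lt_or_gt.symm.imp (lt_of_mem_diagonalFiber hf hy hx) (lt_of_mem_diagonalFiber hf hx hy)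

theorem card_diagonalFiber_add_diagonalFiber_le [AddCommGroup H] [LinearOrder H] {h : ι → H → ℤ}
    (hfh : ∀ i, IsStrictMonoQuasiHom (A i) (f i) (h i)) {i₀ : ι} {X : ℕ}
    (hX : ∀ a ∈ A i₀, |f i₀ a| ≤ X) :
    #(diagonalFiber A f s + diagonalFiber A f s) ≤ (4 * X + 1) * 2 ^ Fintype.card ι := by
  let window : Finset ℤ := Finset.Icc (-(2 * X)) (2 * X)
  let errors : Finset (ι → ℤ) := Fintype.piFinset fun _ ↦ {0, 1}
  let F (z : ι → H) (i : ι) : ℤ := h i (z i)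
  have hmaps : ∀ z ∈ diagonalFiber A f s + diagonalFiber A f s,
      F z ∈ (window ×ˢ errors).image fun p i ↦ p.1 + 2 * (s i - s i₀) + p.2 i := by
    intro z hz
    obtain ⟨x, hx, y, hy, rfl⟩ := Finset.mem_add.1 hz
    obtain ⟨hxA, hx⟩ := mem_diagonalFiber.1 hx
    obtain ⟨hyA, hy⟩ := mem_diagonalFiber.1 hy
    refine Finset.mem_image.2 ⟨(f i₀ (x i₀) + f i₀ (y i₀),
      fun i ↦ h i (x i + y i) - (f i (x i) + f i (y i))), Finset.mem_product.2 ⟨?_, ?_⟩, ?_⟩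
    · have := abs_le.1 (hX _ (hxA i₀))
      have := abs_le.1 (hX _ (hyA i₀))
      exact Finset.mem_Icc.2 ⟨by linarith, by linarith⟩
    · refine Fintype.mem_piFinset.2 fun i ↦ ?_
      have := (hfh i).add_le _ (hxA i) _ (hyA i)
      have := (hfh i).le_add_one _ (hxA i) _ (hyA i)
      rw [Finset.mem_insert, Finset.mem_singleton]
      lia
    · ext i
      simp only [F, Pi.add_apply]
      linarith [hx i i₀, hy i i₀]
  have hinj : Set.InjOn F (diagonalFiber A f s + diagonalFiber A f s : Finset (ι → H)) := by
    intro z hz z' hz' hzz'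
    have hsub : diagonalFiber A f s + diagonalFiber A f s ⊆ Fintype.piFinset fun i ↦ A i + A i := by
      rw [Fintype.piFinset_add]
      exact Finset.add_subset_add diagonalFiber_subset diagonalFiber_subset
    have hmem {z : ι → H} (hz : z ∈ diagonalFiber A f s + diagonalFiber A f s) :
        ∀ i, z i ∈ A i + A i := Fintype.mem_piFinset.1 (hsub hz)
    exact funext fun i ↦ (hfh i).injOn (hmem hz i) (hmem hz' i) (congrFun hzz' i)
  calc #(diagonalFiber A f s + diagonalFiber A f s) ≤ #(window ×ˢ errors) :=
        (Finset.card_le_card_of_injOn F hmaps hinj).trans Finset.card_image_le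
    _ = (4 * X + 1) * 2 ^ Fintype.card ι := by
      rw [Finset.card_product, Int.card_Icc, Fintype.card_piFinset, Finset.prod_const,
        Finset.card_pair zero_ne_one, Finset.card_univ]
      congr 1
      lia

theorem exists_prod_card_le_mul_card_diagonalFiber (i₀ : ι) {X : ℕ}
    (hX : ∀ i, ∀ a ∈ A i, |f i a| ≤ X) :
    ∃ s, ∏ i, #(A i) ≤ (4 * X + 1) ^ (Fintype.card ι - 1) * #(diagonalFiber A f s) := by
  let window (i : ι) : Finset ℤ := if i = i₀ then {0} else Finset.Icc (-(2 * X)) (2 * X)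
  have hself : window i₀ = {0} := if_pos rfl
  have hne {i : ι} (hi : i ≠ i₀) : window i = Finset.Icc (-(2 * X : ℤ)) (2 * X) := if_neg hi
  have hwindow : #(Fintype.piFinset window) = (4 * X + 1) ^ (Fintype.card ι - 1) := by
    have hcard : ∀ i ∈ Finset.univ.erase i₀, #(window i) = 4 * X + 1 := by
      intro i hi
      rw [hne (Finset.ne_of_mem_erase hi), Int.card_Icc]
      lia
    rw [Fintype.card_piFinset, ← Finset.mul_prod_erase _ _ (Finset.mem_univ i₀),
      Finset.prod_congr rfl hcard, Finset.prod_const, hself, Finset.card_singleton, one_mul,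
      Finset.card_erase_of_mem (Finset.mem_univ i₀), Finset.card_univ]
  have hmem : ∀ x ∈ Fintype.piFinset A,
      (fun i ↦ f i (x i) - f i₀ (x i₀)) ∈ Fintype.piFinset window := by
    intro x hx
    rw [Fintype.mem_piFinset] at hx ⊢
    intro i
    obtain rfl | hi := eq_or_ne i i₀
    · simp [hself]
    · have := abs_le.1 (hX i _ (hx i))
      have := abs_le.1 (hX i₀ _ (hx i₀))
      rw [hne hi, Finset.mem_Icc]
      constructor <;> linarith
  obtain ⟨s, -, hs⟩ := exists_card_le_card_mul_card_fiber hmem (Finset.card_pos.1 (by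
    rw [hwindow]; positivity))
  rw [Fintype.card_piFinset, hwindow] at hs
  refine ⟨s, hs.trans (Nat.mul_le_mul_left _ (Finset.card_le_card fun x hx ↦ ?_))⟩
  obtain ⟨hxA, rfl⟩ := Finset.mem_filter.1 hx
  exact mem_diagonalFiber.2 ⟨Fintype.mem_piFinset.1 hxA, by simp⟩

end DiagonalFiber

open scoped Finset in
theorem exists_isDiagonal_of_isStrictMonoQuasiHom {k : ℕ} [NeZero k] {A : Fin k → Finset ℤ}
    {f h : Fin k → ℤ → ℤ} (hfh : ∀ i, IsStrictMonoQuasiHom (A i) (f i) (h i)) {X n : ℕ}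
    (hn : 0 < n) (hX : ∀ i, ∀ a ∈ A i, |f i a| ≤ X * n) {c : ℝ} (hc : 0 ≤ c)
    (hA : ∀ i, c * n ≤ #(A i)) :
    ∃ C ⊆ Fintype.piFinset A, IsDiagonal C ∧ #(C + C) ≤ (4 * X + 1) * 2 ^ k * n ∧
      c ^ k * n ≤ (4 * X + 1) ^ (k - 1) * #C := by
  have hXn : 4 * (X * n) + 1 ≤ (4 * X + 1) * n := by linarith
  replace hX : ∀ i, ∀ a ∈ A i, |f i a| ≤ (X * n : ℕ) := mod_cast hX
  obtain ⟨s, hs⟩ := exists_prod_card_le_mul_card_diagonalFiber (0 : Fin k) hX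
  have hadd := card_diagonalFiber_add_diagonalFiber_le (s := s) hfh (hX 0)
  rw [Fintype.card_fin] at hs hadd
  refine ⟨diagonalFiber A f s, diagonalFiber_subset,
    isDiagonal_diagonalFiber (fun i ↦ (hfh i).strictMonoOn) s, ?_, ?_⟩
  · calc _ ≤ (4 * (X * n) + 1) * 2 ^ k := hadd
      _ ≤ (4 * X + 1) * n * 2 ^ k := by gcongr
      _ = (4 * X + 1) * 2 ^ k * n := by ring
  · refine le_of_mul_le_mul_right ?_ (by positivity : (0 : ℝ) < n ^ (k - 1))
    calc c ^ k * n * n ^ (k - 1) = (c * n) ^ k := by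
          rw [mul_assoc, mul_pow, mul_pow_sub_one (NeZero.ne k)]
      _ = ∏ _i : Fin k, c * (n : ℝ) := (Fin.prod_const k _).symm
      _ ≤ ∏ i, (#(A i) : ℝ) := Finset.prod_le_prod (fun i _ ↦ by positivity) fun i _ ↦ hA i
      _ ≤ ((4 * X + 1) * n) ^ (k - 1) * #(diagonalFiber A f s) :=
          mod_cast hs.trans (by gcongr)
      _ = (4 * X + 1) ^ (k - 1) * #(diagonalFiber A f s) * n ^ (k - 1) := by
          rw [mul_pow, mul_right_comm]

/-- For every `k ≥ 1` and `K > 0` there are `c₁, c₂ > 0` and `N` depending only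
on `k` and `K` such that: if `n ≥ N` and `A₁, …, A_k ⊆ ℤ` each have size `n` and
satisfy `|Aᵢ + Aᵢ| ≤ K|Aᵢ|`, then there is a diagonal set `C ⊆ A₁ × ⋯ × A_k`
with `|C + C| ≤ c₁|C|` and `|C| ≥ c₂ n = c₂ (|A₁| ⋯ |A_k|)^{1/k}`. -/
theorem exists_diagonal_set (k : ℕ) (hk : 0 < k) (K : ℝ) (hK : 0 < K) :
    ∃ (c₁ c₂ : ℝ) (N : ℕ), 0 < c₁ ∧ 0 < c₂ ∧ 0 < N ∧
      ∀ n : ℕ, N ≤ n → ∀ A : Fin k → Finset ℤ,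
        (∀ i, (A i).card = n) →
        (∀ i, (((A i) + (A i)).card : ℝ) ≤ K * ((A i).card : ℝ)) →
        ∃ C : Finset (Fin k → ℤ),
          C ⊆ Fintype.piFinset A ∧
          IsDiagonal C ∧
          ((C + C).card : ℝ) ≤ c₁ * (C.card : ℝ) ∧
          c₂ * (n : ℝ) ≤ (C.card : ℝ) := by
  have := NeZero.of_pos hk
  obtain ⟨c, X, hc, hmodel⟩ := exists_isStrictMonoQuasiHom hK
  let c₂ : ℝ := c ^ k / (4 * X + 1) ^ (k - 1)
  have hc₂ : 0 < c₂ := by positivity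
  refine ⟨(4 * X + 1) * 2 ^ k / c₂, c₂, 1, by positivity, hc₂, one_pos, fun n hn A hcard hA ↦ ?_⟩
  have hne i : (A i).Nonempty := Finset.card_pos.1 (hn.trans_eq (hcard i).symm)
  choose A' hA' f h hA'card hfh hf using fun i ↦ hmodel (A i) (hne i) (hA i)
  simp only [hcard] at hA'card hf
  obtain ⟨C, hCA', hC, hCadd, hCcard⟩ :=
    exists_isDiagonal_of_isStrictMonoQuasiHom hfh hn hf hc.le hA'card
  replace hCcard : c₂ * n ≤ C.card := by
    rwa [← mul_div_right_comm, div_le_iff₀' (by positivity)]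
  refine ⟨C, hCA'.trans (Fintype.piFinset_subset _ _ hA'), hC, ?_, hCcard⟩
  calc ((C + C).card : ℝ) ≤ (4 * X + 1) * 2 ^ k * n := mod_cast hCadd
    _ = (4 * X + 1) * 2 ^ k / c₂ * (c₂ * n) := by field_simp
    _ ≤ (4 * X + 1) * 2 ^ k / c₂ * C.card := by gcongr
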